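/- Let κ be a regular infinite cardinal and let P be a partial order with the κ⁺-stationary chain condition. Then P has the κ⁺-chain condition, i.e., every antichain in P (a set of pairwise incompatible elements) has cardinality at most κ. -/

import Mathlib

open Cardinal

/-- `C` is closed in `o`: every nonzero ordinal below `o` which is a limit of
elements of `C` belongs to `C`. -/
def IsClosedIn (C : Set Ordinal) (o : Ordinal) : Prop :=
  ∀ α : Ordinal, 0 < α → α < o →
    (∀ β < α, ∃ γ ∈ C, β < γ ∧ γ < α) → α ∈ C

/-- `C` is unbounded in `o`. -/
def IsUnboundedIn (C : Set Ordinal) (o : Ordinal) : Prop :=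
  ∀ β < o, ∃ γ ∈ C, β < γ ∧ γ < o

/-- `C` is a club (closed unbounded) subset of `o`. -/
def IsClubIn (C : Set Ordinal) (o : Ordinal) : Prop :=
  C ⊆ Set.Iio o ∧ IsClosedIn C o ∧ IsUnboundedIn C o

/-- `S^{κ⁺}_κ`: the set of ordinals below `κ⁺` of cofinality `κ`. -/
def cofSet (κ : Cardinal) : Set Ordinal :=
  {ξ : Ordinal | ξ < (Order.succ κ).ord ∧ ξ.cof = κ}

/-- `P` has the `κ⁺`-stationary chain condition. -/
def HasStationaryCC (κ : Cardinal) (P : Type) [PartialOrder P] : Prop :=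
  ∀ p : Ordinal → P,
    ∃ (C : Set Ordinal) (f : Ordinal → Ordinal),
      IsClubIn C (Order.succ κ).ord ∧
      (∀ α ∈ C ∩ cofSet κ, f α < α) ∧
      ∀ α ∈ C ∩ cofSet κ, ∀ β ∈ C ∩ cofSet κ,
        f α = f β → ∃ r : P, r ≤ p α ∧ r ≤ p β

/-!
An antichain with more than `κ` elements can be enumerated along `κ⁺`. The regressive function
supplied by the chain condition lives on the intersection of a club with `S^{κ⁺}_κ`. This set is
stationary, because the increasing enumeration of a club is continuous and so takes the
point `κ` to a point of cofinality `κ`. By Fodor's lemma the function therefore takes the same value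
at two distinct ordinals, and the corresponding elements of the antichain are compatible.
-/

open Order Set

universe u

section Fodor

variable {α : Type u} [LinearOrder α]

/-- The diagonal intersection `△_y C y` of a family of subsets of a linear order, which collects
the closed unbounded sets in the proof of Fodor's lemma into a single one. -/
def diagInter (C : α → Set α) : Set α :=
  {x | ∀ y < x, x ∈ C y}

theorem dirSupClosed_diagInter {C : α → Set α} (hC : ∀ y, DirSupClosed (C y)) :
    DirSupClosed (diagInter C) := by
  intro s hs _ _ x hx y hyx
  obtain ⟨z, hz, hyz, -⟩ := hx.exists_between hyx
  have hsub : s ∩ Ici z ⊆ C y := fun w hw ↦ hs hw.1 y (hyz.trans_le hw.2)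
  exact hC y hsub ⟨z, hz, self_mem_Ici⟩ (.of_linearOrder _) (hx.inter_Ici_of_mem hz)

theorem isClub_Ioi [NoMaxOrder α] (x : α) : IsClub (Ioi x) where
  dirSupClosed s hs hs₀ _ y hy := hs₀.elim fun z hz ↦ (hs hz).trans_le (hy.1 hz)
  isCofinal y := by
    obtain ⟨z, hz⟩ := exists_gt (max x y)
    exact ⟨z, (le_max_left x y).trans_lt hz, ((le_max_right x y).trans_lt hz).le⟩

variable [WellFoundedLT α]

theorem exists_isLUB_of_countable (hα : ℵ₀ < cof α) {s : Set α} (hs : s.Countable) :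
    ∃ x, IsLUB s x := by
  have hbdd : BddAbove s := .of_not_isCofinal fun h ↦
    ((cof_le h).trans hs.le_aleph0).not_gt hα
  obtain ⟨x, hx⟩ := WellFoundedLT.exists_minimal ‹_› _ hbdd
  exact ⟨x, minimal_iff_isLeast.1 hx⟩

theorem isStationary_inter_of_isClub (hα : cof α ≠ ℵ₀) {S C : Set α} (hS : IsStationary S)
    (hC : IsClub C) : IsStationary (S ∩ C) := fun t ht ↦ by
  simpa only [inter_assoc] using hS (hC.inter hα ht)

variable [IsRegularCardinalOrder α]

theorem isClub_diagInter (hα : ℵ₀ < cof α) {C : α → Set α} (hC : ∀ y, IsClub (C y)) :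
    IsClub (diagInter C) := by
  refine ⟨dirSupClosed_diagInter fun y ↦ (hC y).dirSupClosed, fun a ↦ ?_⟩
  have hinter (b : α) : IsClub (⋂ y : Iio b, C y) :=
    .iInter hα.ne' (by simpa using mk_Iio_lt b ord_cardinalMk) fun y ↦ hC y
  -- The supremum of `ω` successive jumps into `⋂ y < b, C y`, `b` the current point, works.
  choose h hmem hle using fun b ↦ (hinter b).isCofinal b
  let g : ℕ → α := fun n ↦ h^[n] a
  have hg : Monotone g := monotone_nat_of_le_succ fun n ↦ by
    simpa only [g, Function.iterate_succ_apply'] using hle (g n)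
  have hgC {y : α} {n : ℕ} (hy : y < g n) : g (n + 1) ∈ C y := by
    simpa only [g, Function.iterate_succ_apply'] using mem_iInter.1 (hmem (g n)) ⟨y, hy⟩
  obtain ⟨δ, hδ⟩ := exists_isLUB_of_countable hα (countable_range g)
  refine ⟨δ, fun y hy ↦ ?_, hδ.1 ⟨0, rfl⟩⟩
  obtain ⟨_, ⟨n, rfl⟩, hyn, -⟩ := hδ.exists_between hy
  have hδ' : IsLUB (range g ∩ Ici (g (n + 1))) δ := hδ.inter_Ici_of_mem ⟨n + 1, rfl⟩
  have hne : (range g ∩ Ici (g (n + 1))).Nonempty := ⟨_, ⟨n + 1, rfl⟩, self_mem_Ici⟩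
  refine (hC y).isLUB_mem ?_ hne hδ'
  rintro _ ⟨⟨m, rfl⟩, hm⟩
  obtain hmn | hmn := le_total m (n + 1)
  · rw [(hg hmn).antisymm hm]
    exact hgC hyn
  · obtain ⟨k, rfl⟩ := Nat.exists_eq_add_of_le' hmn
    exact hgC (hyn.trans_le (hg (Nat.le_add_left n k)))

theorem exists_isStationary_fiber_of_regressive (hα : ℵ₀ < cof α) {S : Set α}
    (hS : IsStationary S) {f : α → α} (hf : ∀ x ∈ S, f x < x) :
    ∃ y, IsStationary {x ∈ S | f x = y} := by
  by_contra! h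
  simp only [not_isStationary_iff] at h
  choose C hC hdisj using h
  obtain ⟨x, hxS, hx⟩ := hS (isClub_diagInter hα hC)
  exact (hdisj (f x)).notMem_of_mem_left ⟨hxS, rfl⟩ (hx (f x) (hf x hxS))

theorem exists_lt_map_eq_of_regressive (hα : ℵ₀ < cof α) {S : Set α}
    (hS : IsStationary S) {f : α → α} (hf : ∀ x ∈ S, f x < x) :
    ∃ x ∈ S, ∃ y ∈ S, x < y ∧ f x = f y := by
  obtain ⟨z, hz⟩ := exists_isStationary_fiber_of_regressive hα hS hf
  obtain ⟨x, hxS, hx⟩ := hz.nonempty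
  have : Nonempty α := ⟨x⟩
  have : NoTopOrder α := one_lt_cof_iff.1 (one_lt_aleph0.trans hα)
  have : NoMaxOrder α := (noTopOrder_iff_noMaxOrder α).1 this
  obtain ⟨y, ⟨hyS, hy⟩, hxy⟩ := hz (isClub_Ioi x)
  exact ⟨x, hxS, y, hyS, hxy, hx.trans hy.symm⟩

end Fodor

section Cofinality

theorem cof_Iio_map_of_isNormal {α β : Type u} [LinearOrder α] [LinearOrder β] {f : α → β}
    (hf : IsNormal f) {a : α} (ha : IsSuccLimit a) : cof (Iio (f a)) = cof (Iio a) := by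
  refine (cof_congr_of_strictMono (hf.to_Iio a).strictMono ?_).symm
  rintro ⟨b, hb⟩
  obtain ⟨c, hca, hbc⟩ := (hf.lt_iff_exists_lt ha).1 hb
  exact ⟨_, ⟨⟨c, hca⟩, rfl⟩, hbc.le⟩

theorem isStationary_setOf_cof_Iio_eq {α : Type u} [LinearOrder α] [WellFoundedLT α]
    [IsRegularCardinalOrder α] {a : α} (ha : IsSuccLimit a) :
    IsStationary {x : α | cof (Iio x) = cof (Iio a)} := fun t ht ↦
  ⟨enum t ht.isCofinal a, cof_Iio_map_of_isNormal ht.isNormal_enum ha, (enum t ht.isCofinal a).2⟩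

theorem cof_Iio_Iio {o : Ordinal.{u}} (x : Iio o) :
    cof (Iio x) = Cardinal.lift.{u + 1} x.1.cof := by
  rw [Order.cof_Iio, ← Ordinal.typein_apply (principalSegIio o : Iio o ≤i Ordinal) x,
    Ordinal.lift_cof]
  exact congrArg Ordinal.cof (Ordinal.typein_ordinal x.1)

theorem isRegularCardinalOrder_Iio_ord {c : Cardinal.{u}} (hc : c.IsRegular) :
    IsRegularCardinalOrder (Iio c.ord) where
  type_lt_le_ord_cof := by
    rw [Ordinal.type_lt_Iio, Ordinal.cof_Iio, ← Ordinal.lift_cof, hc.cof_ord, Cardinal.lift_ord]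

theorem isStationary_setOf_cof_eq {c d : Cardinal.{u}} (hc : c.IsRegular) (hd : d.IsRegular)
    (hdc : d < c) : IsStationary {x : Iio c.ord | x.1.cof = d} := by
  have := isRegularCardinalOrder_Iio_ord hc
  let a : Iio c.ord := ⟨d.ord, Cardinal.ord_lt_ord.2 hdc⟩
  have ha : IsSuccLimit a :=
    (principalSegIio c.ord).isSuccLimit_apply_iff.1 (Cardinal.isSuccLimit_ord hd.aleph0_le)
  simpa only [cof_Iio_Iio, a, hd.cof_ord, Cardinal.lift_inj] using isStationary_setOf_cof_Iio_eq ha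

theorem isClub_of_isClubIn {C : Set Ordinal.{u}} {o : Ordinal.{u}} (hC : IsClubIn C o) :
    IsClub {x : Iio o | x.1 ∈ C} where
  dirSupClosed s hs hs₀ _ x hx := by
    by_cases hxs : x ∈ s
    · exact hs hxs
    have hlt {y : Iio o} (hy : y ∈ s) : y < x := (hx.1 hy).lt_of_ne fun h ↦ hxs (h ▸ hy)
    obtain ⟨z, hz⟩ := hs₀
    refine hC.2.1 x (bot_le.trans_lt (hlt hz)) x.2 fun β hβ ↦ ?_
    obtain ⟨y, hy, hβy, hyx⟩ := hx.exists_between' hxs (show ⟨β, hβ.trans x.2⟩ < x from hβ)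
    exact ⟨y, hs hy, hβy, hyx⟩
  isCofinal x := by
    obtain ⟨γ, hγC, hγ, hγo⟩ := hC.2.2 x x.2
    exact ⟨⟨γ, hγo⟩, hγC, hγ.le⟩

end Cofinality

theorem HasStationaryCC.exists_lt_compatible {κ : Cardinal} (hκ : κ.IsRegular) {P : Type}
    [PartialOrder P] (hcc : HasStationaryCC κ P) (p : Iio (succ κ).ord → P) :
    ∃ α β, α < β ∧ ∃ r, r ≤ p α ∧ r ≤ p β := by
  have hsucc : (succ κ).IsRegular := Cardinal.isRegular_succ hκ.aleph0_le
  have := isRegularCardinalOrder_Iio_ord hsucc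
  have hcof : ℵ₀ < cof (Iio (succ κ).ord) := by
    simpa using hκ.aleph0_le
  obtain ⟨C, f, hC, hf, hcompat⟩ := hcc fun α ↦
    if h : α < (succ κ).ord then p ⟨α, h⟩ else p ⟨0, hsucc.ord_pos⟩
  let S : Set (Iio (succ κ).ord) := {α | α.1.cof = κ} ∩ {α | α.1 ∈ C}
  have hS : IsStationary S := isStationary_inter_of_isClub hcof.ne'
    (isStationary_setOf_cof_eq hsucc hκ (lt_succ κ)) (isClub_of_isClubIn hC)
  have hmem {α : Iio (succ κ).ord} (hα : α ∈ S) : α.1 ∈ C ∩ cofSet κ := ⟨hα.2, α.2, hα.1⟩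
  -- The minimum only serves to make `f` a self-map of `κ⁺`.
  let g (α : Iio (succ κ).ord) : Iio (succ κ).ord :=
    ⟨min (f α) α, (min_le_right (f α) α.1).trans_lt (mem_Iio.1 α.2)⟩
  have hg {α} (hα : α ∈ S) : (g α).1 = f α := min_eq_left (hf α (hmem hα)).le
  obtain ⟨α, hα, β, hβ, hαβ, hgαβ⟩ := exists_lt_map_eq_of_regressive hcof hS (f := g)
    fun α hα ↦ Subtype.coe_lt_coe.1 ((hg hα).trans_lt (hf α (hmem hα)))
  have hfαβ : f α = f β := by rw [← hg hα, ← hg hβ, hgαβ]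
  refine ⟨α, β, hαβ, ?_⟩
  simpa only [dif_pos (mem_Iio.1 α.2), dif_pos (mem_Iio.1 β.2)] using
    hcompat α (hmem hα) β (hmem hβ) hfαβ

/-- If `κ` is a regular infinite cardinal and `P` has the `κ⁺`-stationary chain
condition, then `P` has the `κ⁺`-chain condition: every antichain of `P` has
cardinality at most `κ`. -/
theorem stationaryCC_cc (κ : Cardinal) (hκ : κ.IsRegular)
    (P : Type) [PartialOrder P] (hcc : HasStationaryCC κ P)
    (A : Set P)
    (hA : ∀ p ∈ A, ∀ q ∈ A, p ≠ q → ¬ ∃ r : P, r ≤ p ∧ r ≤ q) :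
    Cardinal.mk A ≤ κ := by
  by_contra! hlt
  have hcard : Cardinal.lift.{0} #(Iio (succ κ).ord) ≤ Cardinal.lift.{1} #A := by
    simpa [Cardinal.mk_Iio_ordinal] using succ_le_of_lt hlt
  obtain ⟨e⟩ := Cardinal.lift_mk_le'.1 hcard
  obtain ⟨α, β, hαβ, hcompat⟩ := hcc.exists_lt_compatible hκ fun α ↦ (e α : P)
  refine hA _ (e α).2 _ (e β).2 (fun heq ↦ hαβ.ne ?_) hcompat
  exact e.injective (Subtype.ext heq)
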